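/- Let R = k[x_1,…,x_n] be a polynomial ring over a field k and let I ⊆ R be a nonzero monomial ideal. Let lcm(I) denote the least common multiple of the minimal monomial generators of I. Then reg I ≤ deg lcm(I) − height I + 1. -/

import Mathlib

open MvPolynomial

/-- The depth of the `R`-module `M` with respect to the ideal `J`: the supremum of
lengths of `M`-regular sequences consisting of elements of `J`. -/
noncomputable def idealDepth {R : Type*} [CommRing R] (J : Ideal R)
    (M : Type*) [AddCommGroup M] [Module R M] : ℕ :=
  sSup {d : ℕ | ∃ rs : List R, rs.length = d ∧ (∀ r ∈ rs, r ∈ J) ∧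
    RingTheory.Sequence.IsRegular M rs}

/-- The irrelevant maximal homogeneous ideal `(x₁, …, xₙ)` of the polynomial ring. -/
noncomputable def mxIdeal (k : Type*) [Field k] (n : ℕ) : Ideal (MvPolynomial (Fin n) k) :=
  Ideal.span (Set.range MvPolynomial.X)

/-- `depth R/I`, the depth of the quotient module with respect to the maximal
homogeneous ideal. -/
noncomputable def pdepth {k : Type*} [Field k] {n : ℕ}
    (I : Ideal (MvPolynomial (Fin n) k)) : ℕ :=
  idealDepth (mxIdeal k n) (MvPolynomial (Fin n) k ⧸ I)

/-- `p` is homogeneous of degree `d ∈ ℤ` (where `0` is homogeneous of any degree). -/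
def HomogOfDeg {k : Type*} [Field k] {n : ℕ} (p : MvPolynomial (Fin n) k) (d : ℤ) : Prop :=
  p = 0 ∨ ∃ m : ℕ, (m : ℤ) = d ∧ p.IsHomogeneous m

/-- A finite graded free resolution of `R/I`: free modules `Fᵢ = ⊕_j R(-D i j)` (of rank
`b i`, zero for `i > len`), differentials given by matrices `A i : Fᵢ₊₁ → Fᵢ` whose entries
are homogeneous of the appropriate degrees, and an augmentation `F₀ → R/I` given by the
homogeneous column `v`, the whole complex being exact. -/
structure GradedFreeRes {k : Type*} [Field k] {n : ℕ}
    (I : Ideal (MvPolynomial (Fin n) k)) where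
  len : ℕ
  b : ℕ → ℕ
  hb : ∀ i : ℕ, len < i → b i = 0
  D : (i : ℕ) → Fin (b i) → ℤ
  A : (i : ℕ) → Matrix (Fin (b i)) (Fin (b (i+1))) (MvPolynomial (Fin n) k)
  v : Fin (b 0) → MvPolynomial (Fin n) k
  hv : ∀ r, HomogOfDeg (v r) (D 0 r)
  hA : ∀ (i : ℕ) r c, HomogOfDeg (A i r c) (D (i+1) c - D i r)
  haug : Function.Surjective
    (fun w : Fin (b 0) → MvPolynomial (Fin n) k => Ideal.Quotient.mk I (∑ r, w r * v r))
  hex0 : Function.Exact ((A 0).mulVec)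
    (fun w : Fin (b 0) → MvPolynomial (Fin n) k => Ideal.Quotient.mk I (∑ r, w r * v r))
  hex : ∀ i : ℕ, Function.Exact ((A (i+1)).mulVec) ((A i).mulVec)

/-- The Castelnuovo–Mumford regularity `reg R/I`: the least `r` such that some finite
graded free resolution of `R/I` has all its `i`-th twists `≤ r + i`; equivalently (via the
minimal free resolution) `reg R/I = max { j - i : β_{i,j}(R/I) ≠ 0 }`. -/
noncomputable def regQuot {k : Type*} [Field k] {n : ℕ}
    (I : Ideal (MvPolynomial (Fin n) k)) : ℤ :=
  sInf {r : ℤ | ∃ F : GradedFreeRes I, ∀ (i : ℕ) (j : Fin (F.b i)), F.D i j - (i : ℤ) ≤ r}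

/-- The regularity of a (nonzero) homogeneous ideal: `reg I = reg R/I + 1`. -/
noncomputable def regIdeal {k : Type*} [Field k] {n : ℕ}
    (I : Ideal (MvPolynomial (Fin n) k)) : ℤ :=
  regQuot I + 1

/-- An ideal is homogeneous if it is generated by homogeneous polynomials. -/
def IsHomogeneousIdeal {k : Type*} [Field k] {n : ℕ}
    (I : Ideal (MvPolynomial (Fin n) k)) : Prop :=
  ∃ T : Set (MvPolynomial (Fin n) k), (∀ p ∈ T, ∃ d : ℕ, p.IsHomogeneous d) ∧ I = Ideal.span T

/-- A monomial ideal: an ideal generated by monomials. -/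
def IsMonomialIdeal {k : Type*} [Field k] {n : ℕ}
    (I : Ideal (MvPolynomial (Fin n) k)) : Prop :=
  ∃ T : Set (Fin n →₀ ℕ), I = Ideal.span ((fun m => monomial m (1 : k)) '' T)


/-- The height of an ideal: the infimum of the heights of the prime ideals containing it. -/
noncomputable def idealHeight {R : Type*} [CommRing R] (I : Ideal R) : ℕ∞ :=
  ⨅ (p : PrimeSpectrum R) (_ : I ≤ p.asIdeal), Order.height p


/-! ### Auxiliary material -/

section Aux

universe u

theorem HomogOfDeg.add' {k : Type u} [Field k] {n : ℕ} {p q : MvPolynomial (Fin n) k} {d : ℤ}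
    (hp : HomogOfDeg p d) (hq : HomogOfDeg q d) : HomogOfDeg (p + q) d := by
  rcases hp with rfl | ⟨a, ha, hp⟩
  · simpa using hq
  rcases hq with rfl | ⟨b, hb, hq⟩
  · right; exact ⟨a, ha, by simpa using hp⟩
  have : a = b := by omega
  subst this
  exact Or.inr ⟨a, ha, hp.add hq⟩

theorem HomogOfDeg.mul' {k : Type u} [Field k] {n : ℕ} {p q : MvPolynomial (Fin n) k} {d e : ℤ}
    (hp : HomogOfDeg p d) (hq : HomogOfDeg q e) : HomogOfDeg (p * q) (d + e) := by
  rcases hp with rfl | ⟨a, ha, hp⟩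
  · left; simp
  rcases hq with rfl | ⟨b, hb, hq⟩
  · left; simp
  exact Or.inr ⟨a + b, by push_cast; omega, hp.mul hq⟩

theorem HomogOfDeg.neg' {k : Type u} [Field k] {n : ℕ} {p : MvPolynomial (Fin n) k} {d : ℤ}
    (hp : HomogOfDeg p d) : HomogOfDeg (-p) d := by
  rcases hp with rfl | ⟨a, ha, hp⟩
  · left; simp
  · exact Or.inr ⟨a, ha, hp.neg⟩

/-- The degree `d` part of the graded free module with twists `D`. -/
def Fgr {k : Type u} [Field k] {n : ℕ} {ι : Type} (D : ι → ℤ) (d : ℤ) :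
    AddSubgroup (ι → MvPolynomial (Fin n) k) where
  carrier := {w | ∀ j, HomogOfDeg (w j) (d - D j)}
  zero_mem' := fun _ => Or.inl rfl
  add_mem' := fun ha hb j => (ha j).add' (hb j)
  neg_mem' := fun ha j => (ha j).neg'

theorem mem_Fgr {k : Type u} [Field k] {n : ℕ} {ι : Type} {D : ι → ℤ} {d : ℤ}
    {w : ι → MvPolynomial (Fin n) k} : w ∈ Fgr D d ↔ ∀ j, HomogOfDeg (w j) (d - D j) := Iff.rfl

/-- The grading induced on a submodule of a graded module. -/
def Sgr {R M : Type*} [CommRing R] [AddCommGroup M] [Module R M] (K : Submodule R M)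
    (gr : ℤ → AddSubgroup M) (d : ℤ) : AddSubgroup K :=
  (gr d).comap K.subtype.toAddMonoidHom

theorem mem_Sgr {R M : Type*} [CommRing R] [AddCommGroup M] [Module R M] {K : Submodule R M}
    {gr : ℤ → AddSubgroup M} {d : ℤ} {x : K} : x ∈ Sgr K gr d ↔ (x : M) ∈ gr d := Iff.rfl

/-- Compatibility of a grading with scalar multiplication. -/
def GrOK {k : Type u} [Field k] {n : ℕ} {M : Type u} [AddCommGroup M]
    [Module (MvPolynomial (Fin n) k) M] (gr : ℤ → AddSubgroup M) : Prop :=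
  ∀ (e d : ℤ) (p : MvPolynomial (Fin n) k) (m : M), HomogOfDeg p e → m ∈ gr d →
    p • m ∈ gr (e + d)

/-- `Res k n l r M gr`: the graded module `M` has a graded free resolution of length `< l`
all of whose `i`-th twists are `≤ r + i`. -/
def Res (k : Type u) [Field k] (n : ℕ) : ℕ → ℤ → (M : Type u) → [AddCommGroup M] →
    [Module (MvPolynomial (Fin n) k) M] → (ℤ → AddSubgroup M) → Prop
  | 0, _, M, _, _, _ => Subsingleton M
  | l + 1, r, M, _, _, gr => ∃ (ι : Type) (_ : Fintype ι) (D : ι → ℤ)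
      (φ : (ι → MvPolynomial (Fin n) k) →ₗ[MvPolynomial (Fin n) k] M),
      (∀ j, D j ≤ r) ∧ Function.Surjective φ ∧ (∀ d, ∀ w ∈ Fgr D d, φ w ∈ gr d) ∧
      (∀ d, ∀ m ∈ gr d, ∃ w ∈ Fgr D d, φ w = m) ∧
      Res k n l (r + 1) (LinearMap.ker φ) (Sgr (LinearMap.ker φ) (Fgr D))

variable {k : Type u} [Field k] {n : ℕ}

local notation "RR" => MvPolynomial (Fin n) k

theorem grOK_Fgr {ι : Type} (D : ι → ℤ) : GrOK (k := k) (n := n) (Fgr (k := k) (n := n) D) := by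
  intro e d p m hp hm j
  have := hp.mul' (hm j)
  rw [show e + d - D j = e + (d - D j) by ring]
  exact this

theorem grOK_Sgr {M : Type u} [AddCommGroup M] [Module (MvPolynomial (Fin n) k) M]
    {gr : ℤ → AddSubgroup M} (h : GrOK (k := k) (n := n) gr)
    (K : Submodule (MvPolynomial (Fin n) k) M) :
    GrOK (k := k) (n := n) (Sgr K gr) := by
  intro e d p m hp hm
  exact h e d p m hp hm

theorem Res.mono {l : ℕ} : ∀ {r r' : ℤ} {M : Type u} [AddCommGroup M]
    [Module (MvPolynomial (Fin n) k) M] {gr : ℤ → AddSubgroup M}, r ≤ r' →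
    Res k n l r M gr → Res k n l r' M gr := by
  induction l with
  | zero => intro r r' M _ _ gr _ h; exact h
  | succ l ih =>
    intro r r' M _ _ gr hr h
    obtain ⟨ι, _, D, φ, h1, h2, h3, h4, h5⟩ := h
    exact ⟨ι, inferInstance, D, φ, fun j => (h1 j).trans hr, h2, h3, h4, ih (by omega) h5⟩

theorem Res.succ {l : ℕ} : ∀ {r : ℤ} {M : Type u} [AddCommGroup M]
    [Module (MvPolynomial (Fin n) k) M] {gr : ℤ → AddSubgroup M},
    Res k n l r M gr → Res k n (l + 1) r M gr := by
  induction l with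
  | zero =>
    intro r M _ _ gr h
    have hM : Subsingleton M := h
    refine ⟨Empty, inferInstance, fun _ => 0, 0, fun j => j.elim, ?_, ?_, ?_, ?_⟩
    · intro m; exact ⟨0, Subsingleton.elim _ _⟩
    · intro d w _; exact zero_mem _
    · intro d m _; exact ⟨0, zero_mem _, Subsingleton.elim _ _⟩
    · change Subsingleton _
      infer_instance
  | succ l ih =>
    intro r M _ _ gr h
    obtain ⟨ι, _, D, φ, h1, h2, h3, h4, h5⟩ := h
    exact ⟨ι, inferInstance, D, φ, h1, h2, h3, h4, ih h5⟩

theorem Res.mono_left {l l' : ℕ} (hl : l ≤ l') {r : ℤ} {M : Type u} [AddCommGroup M]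
    [Module (MvPolynomial (Fin n) k) M] {gr : ℤ → AddSubgroup M}
    (h : Res k n l r M gr) : Res k n l' r M gr := by
  induction hl with
  | refl => exact h
  | step _ ih => exact ih.succ

theorem Res.congr_grading {l : ℕ} {r : ℤ} {M : Type u} [AddCommGroup M]
    [Module (MvPolynomial (Fin n) k) M] {gr gr' : ℤ → AddSubgroup M} (hgr : ∀ d, gr d = gr' d)
    (h : Res k n l r M gr) : Res k n l r M gr' := by
  have : gr = gr' := funext hgr
  subst this; exact h

/-- Shifting the grading. -/
theorem Res.shift {l : ℕ} : ∀ {r : ℤ} {M : Type u} [AddCommGroup M]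
    [Module (MvPolynomial (Fin n) k) M] {gr : ℤ → AddSubgroup M},
    Res k n l r M gr → Res k n l (r + 1) M (fun d => gr (d - 1)) := by
  induction l with
  | zero => intro r M _ _ gr h; exact h
  | succ l ih =>
    intro r M _ _ gr h
    obtain ⟨ι, _, D, φ, h1, h2, h3, h4, h5⟩ := h
    have key : ∀ d, Fgr (k := k) (n := n) (fun j => D j + 1) d = Fgr D (d - 1) := by
      intro d
      ext w
      simp only [mem_Fgr]
      refine forall_congr' fun j => ?_
      rw [show d - (D j + 1) = d - 1 - D j by ring]
    refine ⟨ι, inferInstance, fun j => D j + 1, φ, fun j => by have := h1 j; show D j + 1 ≤ r + 1; omega, h2, ?_, ?_, ?_⟩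
    · intro d w hw; rw [key] at hw; exact h3 _ w hw
    · intro d m hm
      obtain ⟨w, hw, e⟩ := h4 _ m hm
      exact ⟨w, by rw [key]; exact hw, e⟩
    · refine Res.congr_grading ?_ (ih h5)
      intro d
      ext x
      simp only [mem_Sgr, key]

theorem Res.iso {l : ℕ} {r : ℤ} {M N : Type u} [AddCommGroup M]
    [Module (MvPolynomial (Fin n) k) M] [AddCommGroup N]
    [Module (MvPolynomial (Fin n) k) N] {gr : ℤ → AddSubgroup M} {gr' : ℤ → AddSubgroup N}
    (e : M ≃ₗ[MvPolynomial (Fin n) k] N) (he : ∀ d m, e m ∈ gr' d ↔ m ∈ gr d)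
    (h : Res k n l r M gr) : Res k n l r N gr' := by
  cases l with
  | zero =>
    have : Subsingleton M := h
    exact e.symm.toEquiv.subsingleton
  | succ l =>
    obtain ⟨ι, _, D, φ, h1, h2, h3, h4, h5⟩ := h
    refine ⟨ι, inferInstance, D, e.toLinearMap.comp φ, h1, e.surjective.comp h2, ?_, ?_, ?_⟩
    · intro d w hw
      exact (he _ _).2 (h3 d w hw)
    · intro d m hm
      obtain ⟨w, hw, hwm⟩ := h4 d (e.symm m) ((he _ _).1 (by simpa using hm))
      exact ⟨w, hw, by simp [hwm]⟩
    · rw [LinearEquiv.ker_comp]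
      exact h5

theorem Res.horseshoe {l : ℕ} : ∀ {r : ℤ} {A B C : Type u} [AddCommGroup A] [AddCommGroup B]
    [AddCommGroup C] [Module (MvPolynomial (Fin n) k) A] [Module (MvPolynomial (Fin n) k) B]
    [Module (MvPolynomial (Fin n) k) C] {grA : ℤ → AddSubgroup A} {grB : ℤ → AddSubgroup B}
    {grC : ℤ → AddSubgroup C} (f : A →ₗ[MvPolynomial (Fin n) k] B)
    (g : B →ₗ[MvPolynomial (Fin n) k] C),
    Function.Injective f → (∀ b, g b = 0 ↔ ∃ a, f a = b) → Function.Surjective g →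
    (∀ d a, f a ∈ grB d ↔ a ∈ grA d) → (∀ d, ∀ b ∈ grB d, g b ∈ grC d) →
    (∀ d, ∀ c ∈ grC d, ∃ b ∈ grB d, g b = c) → GrOK (k := k) (n := n) grB →
    Res k n l r A grA → Res k n l r C grC → Res k n l r B grB := by
  classical
  induction l with
  | zero =>
    intro r A B C _ _ _ _ _ _ grA grB grC f g hf hex hg hfg hgg hgl hok hA hC
    have hA' : Subsingleton A := hA
    have hC' : Subsingleton C := hC
    have key : ∀ b : B, b = 0 := by
      intro b
      obtain ⟨a, ha⟩ := (hex b).1 (Subsingleton.elim _ _)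
      rw [← ha, Subsingleton.elim a 0, map_zero]
    exact ⟨fun a b => (key a).trans (key b).symm⟩
  | succ l ih =>
    intro r A B C _ _ _ _ _ _ grA grB grC f g hf hex hg hfg hgg hgl hok hA hC
    obtain ⟨ιA, _, DA, φA, a1, a2, a3, a4, a5⟩ := hA
    obtain ⟨ιC, _, DC, φC, c1, c2, c3, c4, c5⟩ := hC
    have hs : ∀ j, (Pi.single j 1 : ιC → RR) ∈ Fgr DC (DC j) := by
      intro j i
      by_cases h : i = j
      · subst h
        right
        exact ⟨0, by simp, by simpa using isHomogeneous_one _ _⟩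
      · left; simp [h]
    choose β hβ hβg using fun j => hgl _ _ (c3 _ _ (hs j))
    let ψ : (ιC → RR) →ₗ[RR] B := Fintype.linearCombination RR β
    have hψ : ∀ w, g (ψ w) = φC w := by
      intro w
      have : g.comp ψ = φC := by
        apply LinearMap.pi_ext'
        intro j
        ext
        simp [ψ, hβg]
      rw [← this]; rfl
    have hψd : ∀ d, ∀ w ∈ Fgr DC d, ψ w ∈ grB d := by
      intro d w hw
      simp only [ψ, Fintype.linearCombination_apply]
      refine sum_mem fun j _ => ?_
      have := hok _ _ _ _ (hw j) (hβ j)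
      simpa using this
    let φB : (ιA ⊕ ιC → RR) →ₗ[RR] B :=
      (f.comp φA).comp (LinearMap.funLeft RR RR Sum.inl) + ψ.comp (LinearMap.funLeft RR RR Sum.inr)
    have hφB : ∀ w, φB w = f (φA (w ∘ Sum.inl)) + ψ (w ∘ Sum.inr) := fun w => rfl
    have hgφ : ∀ w, g (φB w) = φC (w ∘ Sum.inr) := by
      intro w
      rw [hφB, map_add, (hex _).2 ⟨_, rfl⟩, zero_add, hψ]
    let D : ιA ⊕ ιC → ℤ := Sum.elim DA DC
    have hF : ∀ d (w : ιA ⊕ ιC → RR), w ∈ Fgr D d ↔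
        w ∘ Sum.inl ∈ Fgr DA d ∧ w ∘ Sum.inr ∈ Fgr DC d := by
      intro d w
      simp only [mem_Fgr, Sum.forall, D, Sum.elim_inl, Sum.elim_inr, Function.comp]
    refine ⟨ιA ⊕ ιC, inferInstance, D, φB, ?_, ?_, ?_, ?_, ?_⟩
    · rintro (j | j)
      · exact a1 j
      · exact c1 j
    · intro b
      obtain ⟨wc, hwc⟩ := c2 (g b)
      obtain ⟨a, ha⟩ := (hex (b - ψ wc)).1 (by rw [map_sub, hψ, hwc, sub_self])
      obtain ⟨wa, hwa⟩ := a2 a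
      refine ⟨Sum.elim wa wc, ?_⟩
      rw [hφB, Sum.elim_comp_inl, Sum.elim_comp_inr, hwa, ha, sub_add_cancel]
    · intro d w hw
      rw [hF] at hw
      rw [hφB]
      exact add_mem ((hfg _ _).2 (a3 _ _ hw.1)) (hψd _ _ hw.2)
    · intro d b hb
      obtain ⟨wc, hwcd, hwc⟩ := c4 d _ (hgg d b hb)
      obtain ⟨a, ha⟩ := (hex (b - ψ wc)).1 (by rw [map_sub, hψ, hwc, sub_self])
      have had : a ∈ grA d := by
        rw [← hfg, ha]
        exact sub_mem hb (hψd _ _ hwcd)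
      obtain ⟨wa, hwad, hwa⟩ := a4 d a had
      refine ⟨Sum.elim wa wc, ?_, ?_⟩
      · rw [hF]; exact ⟨by simpa using hwad, by simpa using hwcd⟩
      · rw [hφB, Sum.elim_comp_inl, Sum.elim_comp_inr, hwa, ha, sub_add_cancel]
    · let i : (ιA → RR) →ₗ[RR] (ιA ⊕ ιC → RR) :=
        { toFun := fun w => Sum.elim w 0
          map_add' := by intro x y; ext (j | j) <;> simp
          map_smul' := by intro x y; ext (j | j) <;> simp }
      have hi : ∀ w, i w = Sum.elim w 0 := fun _ => rfl
      let f' : LinearMap.ker φA →ₗ[RR] LinearMap.ker φB :=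
        (i.comp (LinearMap.ker φA).subtype).codRestrict _ (by
          intro w
          rw [LinearMap.mem_ker, LinearMap.comp_apply, hi, hφB, Sum.elim_comp_inl,
            Sum.elim_comp_inr, map_zero, Submodule.subtype_apply, LinearMap.mem_ker.1 w.2,
            map_zero, add_zero])
      let g' : LinearMap.ker φB →ₗ[RR] LinearMap.ker φC :=
        ((LinearMap.funLeft RR RR Sum.inr).comp (LinearMap.ker φB).subtype).codRestrict _ (by
          intro w
          rw [LinearMap.mem_ker]
          have h1 := hgφ w.1
          rw [LinearMap.mem_ker.1 w.2, map_zero] at h1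
          exact h1.symm)
      have hf' : ∀ w, (f' w : ιA ⊕ ιC → RR) = Sum.elim w.1 0 := fun _ => rfl
      have hg' : ∀ w, (g' w : ιC → RR) = w.1 ∘ Sum.inr := fun _ => rfl
      refine ih f' g' ?_ ?_ ?_ ?_ ?_ ?_ (grOK_Sgr (grOK_Fgr D) _) a5 c5
      · intro x y hxy
        have := congrArg Subtype.val hxy
        rw [hf', hf'] at this
        apply Subtype.ext
        have h2 := congrArg (fun w => w ∘ Sum.inl) this
        simpa using h2
      · intro w
        constructor
        · intro hw
          have hw0 : w.1 ∘ Sum.inr = 0 := by rw [← hg', hw]; rfl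
          have hk : φA (w.1 ∘ Sum.inl) = 0 := by
            have := hφB w.1
            rw [LinearMap.mem_ker.1 w.2, hw0, map_zero, add_zero] at this
            exact hf (by rw [← this, map_zero])
          refine ⟨⟨w.1 ∘ Sum.inl, hk⟩, ?_⟩
          apply Subtype.ext
          rw [hf']
          ext1 (j | j)
          · rfl
          · exact (congrFun hw0 j).symm
        · rintro ⟨a, rfl⟩
          apply Subtype.ext
          rw [hg', hf', Sum.elim_comp_inr]; rfl
      · intro c
        have h0 : g (ψ c.1) = 0 := by rw [hψ]; exact c.2
        obtain ⟨a, ha⟩ := (hex _).1 h0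
        obtain ⟨wa, hwa⟩ := a2 a
        refine ⟨⟨Sum.elim (-wa) c.1, ?_⟩, ?_⟩
        · rw [LinearMap.mem_ker, hφB, Sum.elim_comp_inl, Sum.elim_comp_inr, map_neg, hwa, map_neg,
            ha, neg_add_cancel]
        · apply Subtype.ext
          rw [hg']; simp
      · intro d a
        rw [mem_Sgr, mem_Sgr, hf', hF, Sum.elim_comp_inl, Sum.elim_comp_inr]
        exact ⟨fun h => h.1, fun h => ⟨h, zero_mem _⟩⟩
      · intro d b hb
        rw [mem_Sgr, hF] at hb
        rw [mem_Sgr, hg']; exact hb.2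
      · intro d c hc
        rw [mem_Sgr] at hc
        have h0 : g (ψ c.1) = 0 := by rw [hψ]; exact c.2
        obtain ⟨a, ha⟩ := (hex _).1 h0
        have had : a ∈ grA d := by rw [← hfg, ha]; exact hψd _ _ hc
        obtain ⟨wa, hwad, hwa⟩ := a4 d a had
        refine ⟨⟨Sum.elim (-wa) c.1, ?_⟩, ?_, ?_⟩
        · rw [LinearMap.mem_ker, hφB, Sum.elim_comp_inl, Sum.elim_comp_inr, map_neg, hwa, map_neg,
            ha, neg_add_cancel]
        · rw [mem_Sgr, hF]
          exact ⟨neg_mem hwad, hc⟩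
        · apply Subtype.ext
          rw [hg']; simp

theorem Res.cone {l : ℕ} {r : ℤ} {A B C : Type u} [AddCommGroup A] [AddCommGroup B]
    [AddCommGroup C] [Module (MvPolynomial (Fin n) k) A] [Module (MvPolynomial (Fin n) k) B]
    [Module (MvPolynomial (Fin n) k) C] {grA : ℤ → AddSubgroup A} {grB : ℤ → AddSubgroup B}
    {grC : ℤ → AddSubgroup C} (f : A →ₗ[MvPolynomial (Fin n) k] B)
    (g : B →ₗ[MvPolynomial (Fin n) k] C)
    (hf : Function.Injective f) (hex : ∀ b, g b = 0 ↔ ∃ a, f a = b) (hg : Function.Surjective g)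
    (hfg : ∀ d a, f a ∈ grB d ↔ a ∈ grA d) (hgg : ∀ d, ∀ b ∈ grB d, g b ∈ grC d)
    (hgl : ∀ d, ∀ c ∈ grC d, ∃ b ∈ grB d, g b = c)
    (hA : Res k n l (r + 1) A grA) (hB : Res k n (l + 1) r B grB) :
    Res k n (l + 1) r C grC := by
  obtain ⟨ι, _, D, φ, b1, b2, b3, b4, b5⟩ := hB
  refine ⟨ι, inferInstance, D, g.comp φ, b1, hg.comp b2, fun d w hw => hgg _ _ (b3 _ _ hw),
    ?_, ?_⟩
  · intro d c hc
    obtain ⟨b, hb, rfl⟩ := hgl d c hc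
    obtain ⟨w, hw, rfl⟩ := b4 d b hb
    exact ⟨w, hw, rfl⟩
  · let f' : LinearMap.ker φ →ₗ[RR] LinearMap.ker (g.comp φ) :=
      (LinearMap.ker φ).subtype.codRestrict _ (by
        intro w
        rw [LinearMap.mem_ker, LinearMap.comp_apply, Submodule.subtype_apply,
          LinearMap.mem_ker.1 w.2, map_zero])
    let g₀ : LinearMap.ker (g.comp φ) →ₗ[RR] LinearMap.range f :=
      (φ.comp (LinearMap.ker (g.comp φ)).subtype).codRestrict _ (by
        intro w
        obtain ⟨a, ha⟩ := (hex (φ w.1)).1 w.2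
        exact ⟨a, ha⟩)
    let g' : LinearMap.ker (g.comp φ) →ₗ[RR] A :=
      (LinearEquiv.ofInjective f hf).symm.toLinearMap.comp g₀
    have hf' : ∀ w, (f' w : ι → RR) = w.1 := fun _ => rfl
    have hg' : ∀ w, f (g' w) = φ w.1 := by
      intro w
      have : (LinearEquiv.ofInjective f hf (g' w)) = g₀ w := by simp [g']
      exact congrArg Subtype.val this
    refine Res.horseshoe f' g' ?_ ?_ ?_ ?_ ?_ ?_ (grOK_Sgr (grOK_Fgr D) _) b5 hA
    · intro x y hxy
      have := congrArg Subtype.val hxy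
      exact Subtype.ext this
    · intro w
      constructor
      · intro hw
        refine ⟨⟨w.1, ?_⟩, Subtype.ext rfl⟩
        rw [LinearMap.mem_ker, ← hg', hw, map_zero]
      · rintro ⟨a, rfl⟩
        apply hf
        rw [hg', hf', map_zero]; exact a.2
    · intro a
      obtain ⟨w, hw⟩ := b2 (f a)
      refine ⟨⟨w, ?_⟩, ?_⟩
      · rw [LinearMap.mem_ker, LinearMap.comp_apply, hw]; exact (hex _).2 ⟨a, rfl⟩
      · apply hf; rw [hg', hw]
    · intro d a; exact Iff.rfl
    · intro d b hb
      rw [← hfg, hg']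
      exact b3 _ _ hb
    · intro d a ha
      obtain ⟨w, hwd, hw⟩ := b4 d (f a) ((hfg _ _).2 ha)
      refine ⟨⟨w, ?_⟩, hwd, ?_⟩
      · rw [LinearMap.mem_ker, LinearMap.comp_apply, hw]; exact (hex _).2 ⟨a, rfl⟩
      · apply hf; rw [hg', hw]


/-- The grading of `R/I`. -/
def Qgr (I : Ideal (MvPolynomial (Fin n) k)) (d : ℤ) : AddSubgroup (MvPolynomial (Fin n) k ⧸ I) where
  carrier := {x | ∃ p, HomogOfDeg p d ∧ Submodule.Quotient.mk p = x}
  zero_mem' := ⟨0, Or.inl rfl, rfl⟩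
  add_mem' := by
    rintro _ _ ⟨p, hp, rfl⟩ ⟨q, hq, rfl⟩
    exact ⟨p + q, hp.add' hq, rfl⟩
  neg_mem' := by
    rintro _ ⟨p, hp, rfl⟩
    exact ⟨-p, hp.neg', rfl⟩

theorem mem_Qgr {I : Ideal (MvPolynomial (Fin n) k)} {d : ℤ} {x : MvPolynomial (Fin n) k ⧸ I} :
    x ∈ Qgr I d ↔ ∃ p, HomogOfDeg p d ∧ Submodule.Quotient.mk p = x := Iff.rfl

theorem grOK_Qgr (I : Ideal (MvPolynomial (Fin n) k)) : GrOK (k := k) (n := n) (Qgr I) := by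
  rintro e d p _ hp ⟨q, hq, rfl⟩
  exact ⟨p * q, hp.mul' hq, rfl⟩

/-- `R/I` has a resolution with bound `r`. -/
def RB (I : Ideal (MvPolynomial (Fin n) k)) (r : ℤ) : Prop :=
  ∃ l, Res k n l r (MvPolynomial (Fin n) k ⧸ I) (Qgr I)

theorem RB.mono {I : Ideal (MvPolynomial (Fin n) k)} {r r' : ℤ} (h : RB I r) (hr : r ≤ r') :
    RB I r' := by
  obtain ⟨l, h⟩ := h
  exact ⟨l, h.mono hr⟩

theorem RB_top (r : ℤ) : RB (⊤ : Ideal (MvPolynomial (Fin n) k)) r := by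
  refine ⟨0, ?_⟩
  change Subsingleton _
  infer_instance

theorem RB_bot : RB (⊥ : Ideal (MvPolynomial (Fin n) k)) 0 := by
  refine ⟨1, Unit, inferInstance, fun _ => 0,
    (Submodule.mkQ (⊥ : Ideal (MvPolynomial (Fin n) k))).comp (LinearMap.proj ()), ?_, ?_, ?_, ?_, ?_⟩
  · intro _; exact le_rfl
  · intro x
    obtain ⟨p, rfl⟩ := Submodule.Quotient.mk_surjective _ x
    exact ⟨fun _ => p, rfl⟩
  · intro d w hw
    exact ⟨w (), by simpa using hw (), rfl⟩
  · rintro d _ ⟨p, hp, rfl⟩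
    exact ⟨fun _ => p, fun _ => by simpa using hp, rfl⟩
  · change Subsingleton _
    have : ∀ w : LinearMap.ker ((Submodule.mkQ (⊥ : Ideal (MvPolynomial (Fin n) k))).comp
        (LinearMap.proj ()) : (Unit → RR) →ₗ[RR] _), w = 0 := by
      rintro ⟨w, hw⟩
      apply Subtype.ext
      ext1 ⟨⟩
      have h1 : (Submodule.Quotient.mk (w ()) : RR ⧸ (⊥ : Ideal RR)) = 0 := hw
      rw [Submodule.Quotient.mk_eq_zero] at h1
      simpa using h1
    exact ⟨fun a b => (this a).trans (this b).symm⟩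

theorem homogeneousComponent_X_mul (i : Fin n) (m : ℕ) (p : MvPolynomial (Fin n) k) :
    homogeneousComponent (m + 1) (X i * p) = X i * homogeneousComponent m p := by
  classical
  ext s
  rw [coeff_homogeneousComponent, coeff_X_mul', coeff_X_mul', coeff_homogeneousComponent]
  by_cases h : i ∈ s.support
  · have hs : s.degree = (s - Finsupp.single i 1).degree + 1 := by
      have : s - Finsupp.single i 1 + Finsupp.single i 1 = s := by
        apply tsub_add_cancel_of_le
        rw [Finsupp.single_le_iff]
        have := Finsupp.mem_support_iff.1 h
        omega
      conv_lhs => rw [← this]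
      simp
    simp [h, hs]
  · simp [h]

section SES

variable {I J J' : Ideal (MvPolynomial (Fin n) k)} {i : Fin n}

/-- Multiplication by a variable on the quotients. -/
noncomputable def sesF (hJ : ∀ p, p ∈ J ↔ X i * p ∈ I) :
    (MvPolynomial (Fin n) k ⧸ J) →ₗ[MvPolynomial (Fin n) k] (MvPolynomial (Fin n) k ⧸ I) :=
  Submodule.mapQ J I (LinearMap.mulLeft _ (X i)) (fun p hp => (hJ p).1 hp)

theorem sesF_mk (hJ : ∀ p, p ∈ J ↔ X i * p ∈ I) (p : MvPolynomial (Fin n) k) :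
    sesF hJ (Submodule.Quotient.mk p) = Submodule.Quotient.mk (X i * p) := rfl

/-- The projection of quotients. -/
noncomputable def sesG (hJ' : ∀ p, p ∈ J' ↔ ∃ q, p - X i * q ∈ I) :
    (MvPolynomial (Fin n) k ⧸ I) →ₗ[MvPolynomial (Fin n) k] (MvPolynomial (Fin n) k ⧸ J') :=
  Submodule.mapQ I J' LinearMap.id (fun p hp => (hJ' p).2 ⟨0, by simpa using hp⟩)

theorem sesG_mk (hJ' : ∀ p, p ∈ J' ↔ ∃ q, p - X i * q ∈ I) (p : MvPolynomial (Fin n) k) :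
    sesG hJ' (Submodule.Quotient.mk p) = Submodule.Quotient.mk p := rfl

theorem ses_inj (hJ : ∀ p, p ∈ J ↔ X i * p ∈ I) : Function.Injective (sesF hJ) := by
  rw [injective_iff_map_eq_zero]
  intro a ha
  obtain ⟨p, rfl⟩ := Submodule.Quotient.mk_surjective _ a
  rw [sesF_mk, Submodule.Quotient.mk_eq_zero] at ha
  rw [Submodule.Quotient.mk_eq_zero]
  exact (hJ p).2 ha

theorem ses_exact (hJ : ∀ p, p ∈ J ↔ X i * p ∈ I) (hJ' : ∀ p, p ∈ J' ↔ ∃ q, p - X i * q ∈ I) (b) :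
    sesG hJ' b = 0 ↔ ∃ a, sesF hJ a = b := by
  obtain ⟨p, rfl⟩ := Submodule.Quotient.mk_surjective _ b
  rw [sesG_mk, Submodule.Quotient.mk_eq_zero, hJ']
  constructor
  · rintro ⟨q, hq⟩
    refine ⟨Submodule.Quotient.mk q, ?_⟩
    rw [sesF_mk]
    exact ((Submodule.Quotient.eq I).2 hq).symm
  · rintro ⟨a, ha⟩
    obtain ⟨q, rfl⟩ := Submodule.Quotient.mk_surjective _ a
    rw [sesF_mk] at ha
    exact ⟨q, (Submodule.Quotient.eq I).1 ha.symm⟩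

theorem ses_surj (hJ' : ∀ p, p ∈ J' ↔ ∃ q, p - X i * q ∈ I) : Function.Surjective (sesG hJ') := by
  intro c
  obtain ⟨p, rfl⟩ := Submodule.Quotient.mk_surjective _ c
  exact ⟨Submodule.Quotient.mk p, rfl⟩

theorem ses_gr (hI : ∀ (p : MvPolynomial (Fin n) k) m, p ∈ I → homogeneousComponent m p ∈ I)
    (hJ : ∀ p, p ∈ J ↔ X i * p ∈ I) (d : ℤ) (a) :
    sesF hJ a ∈ Qgr I d ↔ a ∈ Qgr J (d - 1) := by
  obtain ⟨p, rfl⟩ := Submodule.Quotient.mk_surjective _ a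
  rw [sesF_mk]
  constructor
  · rintro ⟨q, hq, e⟩
    have e' : X i * p - q ∈ I := (Submodule.Quotient.eq I).1 e.symm
    by_cases hqI : q ∈ I
    · have : p ∈ J := (hJ p).2 (by simpa using add_mem e' hqI)
      rw [(Submodule.Quotient.mk_eq_zero J).2 this]
      exact zero_mem _
    rcases hq with rfl | ⟨m, hm, hq⟩
    · exact absurd (zero_mem _) hqI
    have h1 := hI _ m e'
    rw [map_sub, homogeneousComponent_of_mem ((mem_homogeneousSubmodule m q).2 hq),
      if_pos rfl] at h1
    cases m with
    | zero =>
      exfalso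
      apply hqI
      rw [homogeneousComponent_zero, show coeff 0 (X i * p) = 0 by simp [coeff_X_mul'], map_zero,
        zero_sub] at h1
      simpa using h1
    | succ m =>
      rw [homogeneousComponent_X_mul] at h1
      refine ⟨homogeneousComponent m p, Or.inr ⟨m, by push_cast at hm; omega,
        homogeneousComponent_isHomogeneous m p⟩, ?_⟩
      refine (Submodule.Quotient.eq J).2 ?_
      rw [hJ]
      have := sub_mem h1 e'
      convert this using 1
      ring
  · rintro ⟨q, hq, e⟩
    refine ⟨X i * q, ?_, ?_⟩
    · have h1 : HomogOfDeg (X i : MvPolynomial (Fin n) k) 1 := Or.inr ⟨1, rfl, isHomogeneous_X k i⟩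
      have := h1.mul' hq
      simpa using this
    · rw [← sesF_mk hJ, e, sesF_mk]

theorem RB_horseshoe
    (hI : ∀ (p : MvPolynomial (Fin n) k) m, p ∈ I → homogeneousComponent m p ∈ I)
    (hJ : ∀ p, p ∈ J ↔ X i * p ∈ I) (hJ' : ∀ p, p ∈ J' ↔ ∃ q, p - X i * q ∈ I) {r : ℤ}
    (h1 : RB J (r - 1)) (h2 : RB J' r) : RB I r := by
  obtain ⟨l1, h1⟩ := h1
  obtain ⟨l2, h2⟩ := h2
  refine ⟨max l1 l2, ?_⟩
  have h1' := (h1.mono_left (le_max_left l1 l2)).shift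
  rw [sub_add_cancel] at h1'
  refine Res.horseshoe (sesF hJ) (sesG hJ') (ses_inj hJ) (ses_exact hJ hJ') (ses_surj hJ')
    (ses_gr hI hJ) ?_ ?_ (grOK_Qgr I) h1' (h2.mono_left (le_max_right l1 l2))
  · rintro d _ ⟨p, hp, rfl⟩
    exact ⟨p, hp, rfl⟩
  · rintro d _ ⟨p, hp, rfl⟩
    exact ⟨Submodule.Quotient.mk p, ⟨p, hp, rfl⟩, rfl⟩

theorem RB_cone
    (hI : ∀ (p : MvPolynomial (Fin n) k) m, p ∈ I → homogeneousComponent m p ∈ I)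
    (hJ : ∀ p, p ∈ J ↔ X i * p ∈ I) (hJ' : ∀ p, p ∈ J' ↔ ∃ q, p - X i * q ∈ I) {r : ℤ}
    (h1 : RB J r) (h2 : RB I r) : RB J' r := by
  obtain ⟨l1, h1⟩ := h1
  obtain ⟨l2, h2⟩ := h2
  refine ⟨max l1 l2 + 1, ?_⟩
  have h1' := (h1.mono_left (le_max_left l1 l2)).shift
  refine Res.cone (sesF hJ) (sesG hJ') (ses_inj hJ) (ses_exact hJ hJ') (ses_surj hJ')
    (ses_gr hI hJ) ?_ ?_ h1' (h2.mono_left ((le_max_right l1 l2).trans (Nat.le_succ _)))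
  · rintro d _ ⟨p, hp, rfl⟩
    exact ⟨p, hp, rfl⟩
  · rintro d _ ⟨p, hp, rfl⟩
    exact ⟨Submodule.Quotient.mk p, ⟨p, hp, rfl⟩, rfl⟩

end SES

/-! ### From `Res` to `GradedFreeRes` -/

theorem ex_fin {l : ℕ} {r : ℤ} {M : Type u} [AddCommGroup M]
    [Module (MvPolynomial (Fin n) k) M] {gr : ℤ → AddSubgroup M} (h : Res k n l r M gr) :
    ∃ (b : ℕ) (D : Fin b → ℤ)
      (φ : (Fin b → MvPolynomial (Fin n) k) →ₗ[MvPolynomial (Fin n) k] M),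
      (∀ j, D j ≤ r) ∧ Function.Surjective φ ∧ (∀ d, ∀ w ∈ Fgr D d, φ w ∈ gr d) ∧
      Res k n (l - 1) (r + 1) (LinearMap.ker φ) (Sgr (LinearMap.ker φ) (Fgr D)) ∧
      (l = 0 → b = 0) := by
  cases l with
  | zero =>
    have hM : Subsingleton M := h
    refine ⟨0, fun _ => 0, 0, fun j => j.elim0, ?_, ?_, ?_, fun _ => rfl⟩
    · intro m; exact ⟨0, Subsingleton.elim _ _⟩
    · intro d w _; exact zero_mem _
    · change Subsingleton _
      infer_instance
  | succ l =>
    obtain ⟨ι, _, D, φ, h1, h2, h3, h4, h5⟩ := h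
    let e := Fintype.equivFin ι
    let E : (Fin (Fintype.card ι) → RR) ≃ₗ[RR] (ι → RR) := LinearEquiv.funCongrLeft RR RR e
    have hE : ∀ d w, E w ∈ Fgr D d ↔ w ∈ Fgr (D ∘ e.symm) d := by
      intro d w
      simp only [mem_Fgr]
      constructor
      · intro h j
        have := h (e.symm j)
        simpa [E, LinearMap.funLeft_apply] using this
      · intro h j
        have := h (e j)
        simpa [E, LinearMap.funLeft_apply] using this
    have hk : LinearMap.ker (φ.comp E.toLinearMap) = (LinearMap.ker φ).comap E.toLinearMap :=
      LinearMap.ker_comp _ _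
    let F : LinearMap.ker φ ≃ₗ[RR] LinearMap.ker (φ.comp E.toLinearMap) :=
      (LinearEquiv.ofSubmodule' E (LinearMap.ker φ)).symm.trans (LinearEquiv.ofEq _ _ hk.symm)
    refine ⟨Fintype.card ι, D ∘ e.symm, φ.comp E.toLinearMap, fun j => h1 _,
      h2.comp E.surjective, ?_, ?_, ?_⟩
    · intro d w hw
      exact h3 _ _ ((hE _ _).2 hw)
    · refine Res.iso F ?_ h5
      intro d m
      rw [mem_Sgr, mem_Sgr, ← hE]
      have : E (F m).1 = m.1 := by
        have h := LinearEquiv.apply_symm_apply (LinearEquiv.ofSubmodule' E (LinearMap.ker φ)) m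
        exact congrArg Subtype.val h
      rw [this]
    · intro h; omega

theorem single_mem_Fgr {b : ℕ} (D : Fin b → ℤ) (j : Fin b) :
    (Pi.single j 1 : Fin b → RR) ∈ Fgr D (D j) := by
  intro i
  by_cases h : i = j
  · subst h
    right
    exact ⟨0, by simp, by simpa using isHomogeneous_one _ _⟩
  · left; simp [h]

/-- The state of the construction of a resolution. -/
structure RState (k : Type u) [Field k] (n : ℕ) where
  b : ℕ
  D : Fin b → ℤ
  K : Submodule (MvPolynomial (Fin n) k) (Fin b → MvPolynomial (Fin n) k)
  l : ℕ
  r : ℤ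
  res : Res k n l r K (Sgr K (Fgr D))

theorem RState.ex_next (s : RState k n) : ∃ (t : RState k n)
    (A : Matrix (Fin s.b) (Fin t.b) (MvPolynomial (Fin n) k)),
    (∀ j, t.D j ≤ s.r) ∧ (∀ i j, HomogOfDeg (A i j) (t.D j - s.D i)) ∧
    (∀ w, w ∈ s.K ↔ ∃ u, A.mulVec u = w) ∧ (∀ u, u ∈ t.K ↔ A.mulVec u = 0) ∧
    t.l = s.l - 1 ∧ t.r = s.r + 1 ∧ (s.l = 0 → t.b = 0) := by
  obtain ⟨b, D, φ, h1, h2, h3, h5, h6⟩ := ex_fin s.res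
  have hA : ∀ u, (LinearMap.toMatrix' (s.K.subtype.comp φ)).mulVec u = (φ u : Fin s.b → RR) := by
    intro u
    rw [LinearMap.toMatrix'_mulVec]; rfl
  refine ⟨⟨b, D, LinearMap.ker φ, s.l - 1, s.r + 1, h5⟩,
    LinearMap.toMatrix' (s.K.subtype.comp φ), h1, ?_, ?_, ?_, rfl, rfl, h6⟩
  · intro i j
    have := h3 _ _ (single_mem_Fgr D j) i
    rw [LinearMap.toMatrix'_apply]
    convert this using 2
    simp
  · intro w
    constructor
    · intro hw
      obtain ⟨u, hu⟩ := h2 ⟨w, hw⟩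
      exact ⟨u, by rw [hA, hu]⟩
    · rintro ⟨u, rfl⟩
      rw [hA]; exact (φ u).2
  · intro u
    rw [hA, LinearMap.mem_ker]
    simp

noncomputable def RState.next (s : RState k n) : RState k n := s.ex_next.choose

noncomputable def RState.mat (s : RState k n) :
    Matrix (Fin s.b) (Fin s.next.b) (MvPolynomial (Fin n) k) := s.ex_next.choose_spec.choose

theorem RState.spec (s : RState k n) :
    (∀ j, s.next.D j ≤ s.r) ∧ (∀ i j, HomogOfDeg (s.mat i j) (s.next.D j - s.D i)) ∧
    (∀ w, w ∈ s.K ↔ ∃ u, s.mat.mulVec u = w) ∧ (∀ u, u ∈ s.next.K ↔ s.mat.mulVec u = 0) ∧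
    s.next.l = s.l - 1 ∧ s.next.r = s.r + 1 ∧ (s.l = 0 → s.next.b = 0) :=
  s.ex_next.choose_spec.choose_spec

noncomputable def RState.seq (s : RState k n) : ℕ → RState k n
  | 0 => s
  | i + 1 => (RState.seq s i).next

theorem RB.exists_res {I : Ideal (MvPolynomial (Fin n) k)} {r : ℤ} (h : RB I r) :
    ∃ F : GradedFreeRes I, ∀ (i : ℕ) (j : Fin (F.b i)), F.D i j - (i : ℤ) ≤ r := by
  obtain ⟨l, h⟩ := h
  obtain ⟨b, D, φ, h1, h2, h3, h5, h6⟩ := ex_fin h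
  choose v hv hvφ using fun j => mem_Qgr.1 (h3 _ _ (single_mem_Fgr D j))
  have hφ : ∀ w, φ w = Ideal.Quotient.mk I (∑ j, w j * v j) := by
    intro w
    have : φ w = φ (∑ j, w j • (Pi.single j 1 : Fin b → RR)) := by
      congr 1
      ext1 t
      simp [Pi.single_apply, Finset.sum_apply]
    rw [this, map_sum, map_sum]
    refine Finset.sum_congr rfl fun j _ => ?_
    rw [map_smul, ← hvφ]; rfl
  let s : RState k n := ⟨b, D, LinearMap.ker φ, l - 1, r + 1, h5⟩
  have hl : ∀ i, (s.seq i).l = l - 1 - i := by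
    intro i
    induction i with
    | zero => rfl
    | succ i ih =>
      change (s.seq i).next.l = _
      rw [(s.seq i).spec.2.2.2.2.1, ih]; omega
  have hr : ∀ i : ℕ, (s.seq i).r = r + 1 + i := by
    intro i
    induction i with
    | zero => simp [RState.seq, s]
    | succ i ih =>
      change (s.seq i).next.r = _
      rw [(s.seq i).spec.2.2.2.2.2.1, ih]; push_cast; ring
  refine ⟨{ len := l, b := fun i => (s.seq i).b, hb := ?_, D := fun i => (s.seq i).D,
            A := fun i => (s.seq i).mat, v := v, hv := hv,
            hA := fun i => (s.seq i).spec.2.1, haug := ?_, hex0 := ?_, hex := ?_ }, ?_⟩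
  · intro i hi
    cases i with
    | zero => omega
    | succ i =>
      exact (s.seq i).spec.2.2.2.2.2.2 (by rw [hl]; omega)
  · intro x
    obtain ⟨w, hw⟩ := h2 x
    exact ⟨w, (hφ w).symm.trans hw⟩
  · intro w
    have h1 := (s.seq 0).spec.2.2.1 w
    refine Iff.trans ?_ h1
    change Ideal.Quotient.mk I (∑ j, (show Fin b → RR from w) j * v j) = 0 ↔
      φ (show Fin b → RR from w) = 0
    rw [hφ]
  · intro i w
    have h1 := (s.seq (i + 1)).spec.2.2.1 w
    have h2 := (s.seq i).spec.2.2.2.1 w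
    exact h2.symm.trans h1
  · intro i j
    cases i with
    | zero =>
      have h : (s.seq 0).D j ≤ r := h1 j
      simpa using h
    | succ i =>
      have h := (s.seq i).spec.1 j
      rw [hr] at h
      change (s.seq i).next.D j - ((i + 1 : ℕ) : ℤ) ≤ r
      push_cast
      omega


/-! ### Combinatorics of monomial ideals -/

/-- The monomial ideal generated by the monomials with exponents in `G`. -/
noncomputable def MI (k : Type u) [Field k] {n : ℕ} (G : Finset (Fin n →₀ ℕ)) :
    Ideal (MvPolynomial (Fin n) k) :=
  Ideal.span ((fun m => monomial m (1 : k)) '' (G : Set (Fin n →₀ ℕ)))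

theorem mem_MI {G : Finset (Fin n →₀ ℕ)} {p : MvPolynomial (Fin n) k} :
    p ∈ MI k G ↔ ∀ s ∈ p.support, ∃ m ∈ G, m ≤ s := by
  rw [MI, mem_ideal_span_monomial_image]
  simp

theorem MI_hom {G : Finset (Fin n →₀ ℕ)} (p : MvPolynomial (Fin n) k) (m : ℕ) (hp : p ∈ MI k G) :
    homogeneousComponent m p ∈ MI k G := by
  rw [mem_MI] at hp ⊢
  intro s hs
  apply hp
  rw [mem_support_iff, coeff_homogeneousComponent] at hs
  rw [mem_support_iff]
  intro h
  simp [h] at hs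

theorem MI_colon [DecidableEq (Fin n →₀ ℕ)] {G : Finset (Fin n →₀ ℕ)} (i : Fin n)
    (p : MvPolynomial (Fin n) k) :
    p ∈ MI k (G.image fun m => m - Finsupp.single i 1) ↔ X i * p ∈ MI k G := by
  rw [mem_MI, mem_MI, support_X_mul]
  simp only [Finset.mem_map, forall_exists_index, and_imp, forall_apply_eq_imp_iff₂,
    Finset.exists_mem_image, addLeftEmbedding_apply]
  refine forall₂_congr fun s _ => exists_congr fun m => and_congr_right fun _ => ?_
  rw [add_comm]
  exact tsub_le_iff_right

theorem MI_sum [DecidableEq (Fin n →₀ ℕ)] {G : Finset (Fin n →₀ ℕ)} (i : Fin n)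
    (p : MvPolynomial (Fin n) k) :
    p ∈ MI k (insert (Finsupp.single i 1) (G.filter fun m => m i = 0)) ↔
      ∃ q, p - X i * q ∈ MI k G := by
  have hX : (X i : RR) ∈ MI k (insert (Finsupp.single i 1) (G.filter fun m => m i = 0)) :=
    Ideal.subset_span ⟨Finsupp.single i 1, by simp, rfl⟩
  constructor
  · intro hp
    have hle : MI k (insert (Finsupp.single i 1) (G.filter fun m => m i = 0)) ≤
        MI k G ⊔ Ideal.span {(X i : RR)} := by
      rw [MI, Ideal.span_le]
      rintro _ ⟨m, hm, rfl⟩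
      simp only [Finset.coe_insert, Set.mem_insert_iff, Finset.mem_coe, Finset.mem_filter] at hm
      rcases hm with rfl | hm
      · exact Ideal.mem_sup_right (Ideal.subset_span rfl)
      · exact Ideal.mem_sup_left (Ideal.subset_span ⟨m, hm.1, rfl⟩)
    obtain ⟨y, hy, z, hz, rfl⟩ := Submodule.mem_sup.1 (hle hp)
    obtain ⟨q, rfl⟩ := Ideal.mem_span_singleton.1 hz
    exact ⟨q, by simpa using hy⟩
  · rintro ⟨q, hq⟩
    have h1 : p - X i * q ∈ MI k (insert (Finsupp.single i 1) (G.filter fun m => m i = 0)) := by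
      rw [mem_MI] at hq ⊢
      intro s hs
      obtain ⟨m, hm, hms⟩ := hq s hs
      by_cases hi : m i = 0
      · exact ⟨m, by simp [hm, hi], hms⟩
      · refine ⟨Finsupp.single i 1, by simp, le_trans ?_ hms⟩
        rw [Finsupp.single_le_iff]; omega
    have := add_mem h1 (Ideal.mul_mem_right q _ hX)
    simpa using this

theorem MI_vars [DecidableEq (Fin n →₀ ℕ)] (S : Finset (Fin n)) :
    RB (MI k (S.image fun i => Finsupp.single i 1)) 0 := by
  induction S using Finset.induction_on with
  | empty =>
    have : MI k ((∅ : Finset (Fin n)).image fun i => Finsupp.single i 1) = ⊥ := by simp [MI]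
    rw [this]
    exact RB_bot
  | insert i S hi ih =>
    have h1 : (S.image fun j => (Finsupp.single j 1 : Fin n →₀ ℕ)).image
        (fun m => m - Finsupp.single i 1) = S.image fun j => Finsupp.single j 1 := by
      rw [Finset.image_image]
      refine Finset.image_congr fun j hj => ?_
      have hj' : j ≠ i := by rintro rfl; exact hi hj
      ext t
      simp only [Function.comp, Finsupp.tsub_apply, Finsupp.single_apply]
      split_ifs with h h' <;> simp_all
    have h2 : insert (Finsupp.single i 1)
        ((S.image fun j => (Finsupp.single j 1 : Fin n →₀ ℕ)).filter fun m => m i = 0) =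
        (insert i S).image fun j => Finsupp.single j 1 := by
      rw [Finset.image_insert, Finset.filter_true_of_mem]
      intro m hm
      obtain ⟨j, hj, rfl⟩ := Finset.mem_image.1 hm
      have hj' : j ≠ i := by rintro rfl; exact hi hj
      simp [hj']
    have hc := MI_colon (k := k) (G := S.image fun j => (Finsupp.single j 1 : Fin n →₀ ℕ)) i
    have hs := MI_sum (k := k) (G := S.image fun j => (Finsupp.single j 1 : Fin n →₀ ℕ)) i
    rw [h1] at hc
    rw [h2] at hs
    exact RB_cone MI_hom hc hs ih ih

theorem idealHeight_mono {R : Type*} [CommRing R] {I J : Ideal R} (h : I ≤ J) :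
    idealHeight I ≤ idealHeight J := by
  refine le_iInf₂ fun p hp => ?_
  exact iInf₂_le p (h.trans hp)

theorem idealHeight_le_card {S : Finset (MvPolynomial (Fin n) k)}
    (hS : Ideal.span (S : Set (MvPolynomial (Fin n) k)) ≠ ⊤) :
    idealHeight (Ideal.span (S : Set (MvPolynomial (Fin n) k))) ≤ S.card := by
  obtain ⟨p, hp⟩ := Ideal.nonempty_minimalPrimes hS
  have hpp : p.IsPrime := hp.1.1
  have h1 := Ideal.height_le_card_of_mem_minimalPrimes_span_finset hp
  refine le_trans (iInf₂_le (⟨p, hpp⟩ : PrimeSpectrum _) hp.1.2) ?_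
  rw [← PrimeSpectrum.height_eq_orderHeight]
  exact h1

/-- The degree of the lcm. -/
def dlcm (G : Finset (Fin n →₀ ℕ)) : ℕ := ∑ i : Fin n, G.sup fun m => m i

/-- The measure for the induction. -/
noncomputable def meas (G : Finset (Fin n →₀ ℕ)) : ℕ :=
  ∑ m ∈ G, if 2 ≤ m.degree then m.degree else 0

theorem degree_tsub_le (m : Fin n →₀ ℕ) (i : Fin n) :
    (m - Finsupp.single i 1).degree ≤ m.degree := by
  rw [Finsupp.degree_eq_sum, Finsupp.degree_eq_sum]
  exact Finset.sum_le_sum fun j _ => by simp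

theorem degree_tsub_lt (m : Fin n →₀ ℕ) (i : Fin n) (h : m i ≠ 0) :
    (m - Finsupp.single i 1).degree < m.degree := by
  rw [Finsupp.degree_eq_sum, Finsupp.degree_eq_sum]
  refine Finset.sum_lt_sum (fun j _ => by simp) ⟨i, Finset.mem_univ _, ?_⟩
  simp; omega

theorem sum_image_le_nat {α β : Type*} [DecidableEq β] (s : Finset α) (g : α → β) (f : β → ℕ) :
    ∑ b ∈ s.image g, f b ≤ ∑ a ∈ s, f (g a) := by
  classical
  induction s using Finset.induction_on with
  | empty => simp
  | insert a s ha ih =>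
    rw [Finset.image_insert, Finset.sum_insert ha]
    by_cases h : g a ∈ s.image g
    · rw [Finset.insert_eq_of_mem h]; omega
    · rw [Finset.sum_insert h]; omega

theorem MI_bound (N : ℕ) : ∀ (G : Finset (Fin n →₀ ℕ)), meas G = N → ∀ h : ℕ,
    (h : ℕ∞) ≤ idealHeight (MI k G) → RB (MI k G) ((dlcm G : ℤ) - h) := by
  classical
  induction N using Nat.strong_induction_on with
  | _ N ih =>
  intro G hN h hh
  by_cases h0 : (0 : Fin n →₀ ℕ) ∈ G
  · have : MI k G = ⊤ := by
      rw [Ideal.eq_top_iff_one, mem_MI]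
      intro s _
      exact ⟨0, h0, zero_le⟩
    rw [this]
    exact RB_top _
  by_cases hG : ∃ m ∈ G, 2 ≤ m.degree
  · obtain ⟨m, hm, hm2⟩ := hG
    have hi : ∃ i, m i ≠ 0 := by
      by_contra hcon
      push Not at hcon
      have : m = 0 := by ext i; exact hcon i
      subst this; exact h0 hm
    obtain ⟨i, hi⟩ := hi
    have hsup : 1 ≤ G.sup fun m => m i :=
      le_trans (by omega) (Finset.le_sup (f := fun m : Fin n →₀ ℕ => m i) hm)
    refine RB_horseshoe MI_hom (MI_colon i) (MI_sum i) ?_ ?_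
    · set G₁ := G.image fun m => m - Finsupp.single i 1 with hG₁
      have hd : dlcm G₁ + 1 ≤ dlcm G := by
        rw [Nat.add_one_le_iff]
        refine Finset.sum_lt_sum (fun j _ => ?_) ⟨i, Finset.mem_univ _, ?_⟩
        · rw [hG₁, Finset.sup_image]
          refine Finset.sup_mono_fun fun m _ => ?_
          simp
        · rw [hG₁, Finset.sup_image, Finset.sup_lt_iff (Nat.lt_of_lt_of_le Nat.zero_lt_one hsup)]
          intro a ha
          have := Finset.le_sup (f := fun m : Fin n →₀ ℕ => m i) ha
          simp only [Function.comp, Finsupp.tsub_apply, Finsupp.single_eq_same] at this ⊢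
          omega
      have hme : meas G₁ < N := by
        rw [← hN]
        refine lt_of_le_of_lt (sum_image_le_nat _ _ _) ?_
        refine Finset.sum_lt_sum (fun a _ => ?_) ⟨m, hm, ?_⟩
        · have := degree_tsub_le a i
          split_ifs <;> omega
        · have := degree_tsub_lt m i hi
          split_ifs <;> omega
      have hle : MI k G ≤ MI k G₁ := by
        intro p hp
        rw [hG₁, MI_colon]
        exact Ideal.mul_mem_left _ _ hp
      refine (ih _ hme G₁ rfl h (hh.trans (idealHeight_mono hle))).mono ?_
      omega
    · set G₂ := insert (Finsupp.single i 1) (G.filter fun m => m i = 0) with hG₂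
      have hd : dlcm G₂ ≤ dlcm G := by
        refine Finset.sum_le_sum fun j _ => ?_
        rw [hG₂, Finset.sup_insert]
        refine sup_le ?_ (Finset.sup_mono (Finset.filter_subset _ _))
        by_cases hj : j = i
        · subst hj; simpa using hsup
        · simp [Ne.symm hj]
      have hme : meas G₂ < N := by
        rw [← hN]
        have h1 : meas G₂ ≤ ∑ m ∈ G.filter (fun m => m i = 0),
            if 2 ≤ m.degree then m.degree else 0 := by
          rw [meas, hG₂]
          rw [Finset.sum_insert (by simp)]
          simp
        refine lt_of_le_of_lt h1 ?_
        refine Finset.sum_lt_sum_of_subset (Finset.filter_subset _ _) hm (by simp [hi]) ?_ ?_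
        · rw [if_pos hm2]; omega
        · intros; exact Nat.zero_le _
      have hle : MI k G ≤ MI k G₂ := by
        intro p hp
        rw [hG₂, MI_sum]
        exact ⟨0, by simpa using hp⟩
      refine (ih _ hme G₂ rfl h (hh.trans (idealHeight_mono hle))).mono ?_
      omega
  · push Not at hG
    let S : Finset (Fin n) := Finset.univ.filter fun i => Finsupp.single i 1 ∈ G
    have hGS : G = S.image fun i => Finsupp.single i 1 := by
      ext m
      simp only [S, Finset.mem_image, Finset.mem_filter, Finset.mem_univ, true_and]
      constructor
      · intro hm
        have h1 := hG m hm
        have h2 : m.degree ≠ 0 := by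
          intro h
          rw [Finsupp.degree_eq_zero_iff] at h
          subst h; exact h0 hm
        have h3 : m.degree = 1 := by omega
        have hi : ∃ i, m i ≠ 0 := by
          by_contra hcon
          push Not at hcon
          have : m = 0 := by ext i; exact hcon i
          subst this; exact h0 hm
        obtain ⟨i, hi⟩ := hi
        have h4 : (m - Finsupp.single i 1).degree = 0 := by
          have := degree_tsub_lt m i hi
          omega
        rw [Finsupp.degree_eq_zero_iff] at h4
        have h5 : m - Finsupp.single i 1 + Finsupp.single i 1 = m := by
          apply tsub_add_cancel_of_le
          rw [Finsupp.single_le_iff]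
          omega
        rw [h4, zero_add] at h5
        exact ⟨i, by rw [h5]; exact hm, h5⟩
      · rintro ⟨i, hi, rfl⟩; exact hi
    have hcard : S.card ≤ dlcm G := by
      rw [dlcm, Finset.card_eq_sum_ones]
      refine le_trans ?_ (Finset.sum_le_univ_sum_of_nonneg (s := S) fun _ => Nat.zero_le _)
      refine Finset.sum_le_sum fun i hi => ?_
      have := Finset.le_sup (f := fun m : Fin n →₀ ℕ => m i) (Finset.mem_filter.1 hi).2
      simpa using this
    have hspan : MI k G = Ideal.span ((G.image fun m => monomial m (1 : k) : Finset RR) : Set RR) := by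
      rw [MI, Finset.coe_image]
    have hne : MI k G ≠ ⊤ := by
      rw [Ne, Ideal.eq_top_iff_one, mem_MI]
      intro hcon
      obtain ⟨m, hm, hm0⟩ := hcon 0 (by simp)
      exact h0 ((le_zero_iff.1 hm0) ▸ hm)
    have hht : idealHeight (MI k G) ≤ S.card := by
      rw [hspan] at hne ⊢
      refine (idealHeight_le_card hne).trans ?_
      refine Nat.cast_le.2 (Finset.card_image_le.trans ?_)
      rw [hGS]; exact Finset.card_image_le
    have hhS : h ≤ S.card := by exact_mod_cast hh.trans hht
    have := MI_vars (k := k) S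
    rw [← hGS] at this
    exact this.mono (by omega)

theorem bddBelow_reg {I : Ideal (MvPolynomial (Fin n) k)} (hI : I ≠ ⊤) :
    BddBelow {r : ℤ | ∃ F : GradedFreeRes I,
      ∀ (i : ℕ) (j : Fin (F.b i)), F.D i j - (i : ℤ) ≤ r} := by
  refine ⟨0, ?_⟩
  rintro r ⟨F, hF⟩
  have : ∃ j, F.v j ≠ 0 := by
    by_contra hcon
    push Not at hcon
    obtain ⟨w, hw⟩ := F.haug (Ideal.Quotient.mk I 1)
    simp only [hcon, mul_zero, Finset.sum_const_zero, map_zero] at hw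
    apply hI
    rw [Ideal.eq_top_iff_one]
    exact Ideal.Quotient.eq_zero_iff_mem.1 hw.symm
  obtain ⟨j, hj⟩ := this
  have h1 := hF 0 j
  rcases F.hv j with h | ⟨m, hm, _⟩
  · exact absurd h hj
  · simp at h1
    omega

end Aux

/-- **Corollary (Hoa–Trung).** Let `I` be a nonzero monomial ideal with minimal monomial
generating set `G`. Then `reg I ≤ deg lcm(I) - height I + 1`, where `lcm(I)` is the least
common multiple of the minimal monomial generators (so
`deg lcm(I) = ∑ᵢ maxₘ∈G m(i)`). -/
theorem reg_le_deg_lcm_sub_height {k : Type*} [Field k] {n : ℕ}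
    (I : Ideal (MvPolynomial (Fin n) k)) (hI0 : I ≠ ⊥)
    (G : Finset (Fin n →₀ ℕ))
    (hG : I = Ideal.span ((fun m => monomial m (1 : k)) '' (G : Set (Fin n →₀ ℕ))))
    (hmin : ∀ m ∈ G, (monomial m (1 : k)) ∉
      Ideal.span ((fun m' => monomial m' (1 : k)) '' ((G.erase m : Finset (Fin n →₀ ℕ)) :
        Set (Fin n →₀ ℕ))))
    (h : ℕ) (hh : idealHeight I = (h : ℕ∞)) :
    regIdeal I ≤ ((∑ i : Fin n, G.sup fun m => m i : ℕ) : ℤ) - (h : ℤ) + 1 := by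
  have hMI : I = MI k G := hG
  have hI : I ≠ ⊤ := by
    rintro rfl
    have htop : idealHeight (⊤ : Ideal (MvPolynomial (Fin n) k)) = ⊤ := by
      rw [idealHeight, iInf₂_eq_top]
      intro p hp
      exact absurd (top_le_iff.1 hp) p.2.ne_top
    rw [htop] at hh
    exact absurd hh.symm (ENat.natCast_ne_top h)
  have h1 : RB I ((dlcm G : ℤ) - h) := by
    have := MI_bound (k := k) _ G rfl h (by rw [← hMI, hh])
    rwa [← hMI] at this
  have h2 : regQuot I ≤ (dlcm G : ℤ) - h := csInf_le (bddBelow_reg hI) h1.exists_res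
  have h3 : (dlcm G : ℤ) = ((∑ i : Fin n, G.sup fun m => m i : ℕ) : ℤ) := rfl
  rw [regIdeal, ← h3]
  omega
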